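/- arXiv:math/0211366 — 8 statements merged into one kernel-verified Lean document; each statement's English description precedes it below -/
import Mathlib

section
/- Let R be a commutative ring and x, y ∈ R. Then for every n ≥ 0, F_{n+1}² + y·F_n² = F_{2n+1}. -/
/-- Bivariate Fibonacci polynomials: `F 0 = 0`, `F 1 = 1`, `F (n+2) = x*F (n+1) + y*F n`. -/
def bF {R : Type*} [CommRing R] (x y : R) : ℕ → R
  | 0 => 0
  | 1 => 1
  | n + 2 => x * bF x y (n + 1) + y * bF x y n

theorem bF_add {R : Type*} [CommRing R] (x y : R) (m : ℕ) :
    ∀ n : ℕ, bF x y (m + n + 1) = bF x y (m + 1) * bF x y (n + 1) + y * bF x y m * bF x y n := by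
  intro n
  induction n generalizing m with
  | zero => simp [bF]
  | succ k ih =>
    have h := ih (m + 1)
    rw [show m + 1 + k + 1 = m + (k + 1) + 1 by ring] at h
    rw [h]
    simp only [bF]
    ring

/-- For every `n ≥ 0`, `F (n+1) ^ 2 + y * F n ^ 2 = F (2n+1)`. -/
theorem fib_sq_add {R : Type*} [CommRing R] (x y : R) :
    ∀ n : ℕ, bF x y (n + 1) ^ 2 + y * bF x y n ^ 2 = bF x y (2 * n + 1) := by
  intro n
  rw [two_mul, bF_add]
  ring
end

section
/- Let K be a field, x, y ∈ K with y ≠ 0, and a₀, a₁ ∈ K. Extend H to all integer indices by requiring H_m = x·H_{m−1} + y·H_{m−2} for every integer m (equivalently H_{−n} = −(x/y)·H_{−(n−1)} + (1/y)·H_{−(n−2)}). Then for every n ≥ 0, H_{−n} = ((−1)ⁿ / yⁿ)·(a₀·F_{n+1} − a₁·F_n). -/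
/-- Extend `H` to all integer indices by the recurrence `H m = x H (m−1) + y H (m−2)`.
Then for every `n ≥ 0`, `H (−n) = ((−1)ⁿ / yⁿ) * (a₀ F (n+1) − a₁ F n)`. -/
theorem gen_neg_index {K : Type*} [Field K] (x y a0 a1 : K) (hy : y ≠ 0)
    (H : ℤ → K) (h0 : H 0 = a0) (h1 : H 1 = a1)
    (hrec : ∀ m : ℤ, H m = x * H (m - 1) + y * H (m - 2)) :
    ∀ n : ℕ,
      H (-(n : ℤ)) = ((-1) ^ n / y ^ n) * (a0 * bF x y (n + 1) - a1 * bF x y n) := by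
  have key : ∀ n : ℕ,
      H (-(n : ℤ)) * y ^ n = (-1) ^ n * (a0 * bF x y (n + 1) - a1 * bF x y n) ∧
      H (-((n + 1 : ℕ) : ℤ)) * y ^ (n + 1) =
        (-1) ^ (n + 1) * (a0 * bF x y (n + 2) - a1 * bF x y (n + 1)) := by
    intro n
    induction n with
    | zero =>
      have h := hrec 1
      norm_num at h
      rw [h0, h1] at h
      constructor
      · simp [bF, h0]
      · simp [bF]
        linear_combination -h
    | succ n ih =>
      obtain ⟨ih1, ih2⟩ := ih
      refine ⟨ih2, ?_⟩
      have h := hrec (-(n : ℤ))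
      have e1 : -(n : ℤ) - 1 = -((n + 1 : ℕ) : ℤ) := by push_cast; ring
      have e2 : -(n : ℤ) - 2 = -((n + 1 + 1 : ℕ) : ℤ) := by push_cast; ring
      rw [e1, e2] at h
      have f2 : bF x y (n + 2) = x * bF x y (n + 1) + y * bF x y n := by rw [bF]
      have f3 : bF x y (n + 1 + 2) = x * bF x y (n + 2) + y * bF x y (n + 1) := by
        rw [bF]
      rw [f3, show n + 1 + 1 = n + 2 from rfl]
      rw [show n + 1 + 1 = n + 2 from rfl] at h
      linear_combination (-y ^ (n + 1)) * h + y * ih1 - x * ih2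
        + (-1) ^ n * a1 * f2
  intro n
  have h := (key n).1
  have hyn : y ^ n ≠ 0 := pow_ne_zero n hy
  rw [div_mul_eq_mul_div, eq_div_iff hyn]
  exact h
end

section
/- Let R be a commutative ring, x, y ∈ R, and a₀, a₁ ∈ R. Then for every n ≥ 1, H_n·H_{n+2} − H_{n+1}² = (−1)ⁿ·y^{n−1}·(a₀·a₁·x·y + a₀²·y² − a₁²·y) (the Simpson formula). -/
/-- Generalized bivariate Fibonacci sequence: `H 0 = a0`, `H 1 = a1`,
`H (n+2) = x*H (n+1) + y*H n`. -/
def bH {R : Type*} [CommRing R] (x y a0 a1 : R) : ℕ → R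
  | 0 => a0
  | 1 => a1
  | n + 2 => x * bH x y a0 a1 (n + 1) + y * bH x y a0 a1 n

/-- **Simpson formula.** For every `n ≥ 1`,
`H n * H (n+2) − H (n+1) ^ 2 = (−1)ⁿ y^(n−1) (a₀ a₁ x y + a₀² y² − a₁² y)`. -/
theorem simpson_formula {R : Type*} [CommRing R] (x y a0 a1 : R) :
    ∀ n : ℕ, 1 ≤ n →
      bH x y a0 a1 n * bH x y a0 a1 (n + 2) - bH x y a0 a1 (n + 1) ^ 2 =
        (-1) ^ n * y ^ (n - 1) * (a0 * a1 * x * y + a0 ^ 2 * y ^ 2 - a1 ^ 2 * y) := by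
  intro n hn
  induction n, hn using Nat.le_induction with
  | base =>
    simp only [bH]
    ring
  | succ n hn ih =>
    obtain ⟨m, rfl⟩ : ∃ m, n = m + 1 := ⟨n - 1, by omega⟩
    have h3 : bH x y a0 a1 (m + 1 + 1 + 2) =
        x * bH x y a0 a1 (m + 1 + 2) + y * bH x y a0 a1 (m + 1 + 1) := rfl
    have h2 : bH x y a0 a1 (m + 1 + 2) =
        x * bH x y a0 a1 (m + 1 + 1) + y * bH x y a0 a1 (m + 1) := rfl
    have e : bH x y a0 a1 (m + 1 + 1 + 1) = bH x y a0 a1 (m + 1 + 2) := rfl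
    simp only [Nat.add_sub_cancel] at ih ⊢
    rw [e, h3]
    rw [pow_succ (-1 : R) (m + 1), pow_succ y m]
    linear_combination (-y) * ih + bH x y a0 a1 (m + 1 + 2) * (-1) * h2
end

section
/- Let x, y ∈ ℂ and let w ∈ ℂ satisfy w² = y, and let i = √(−1). Then for every n ≥ 1, F_n(x, y) = ∑_{r=0}^{n−1} C(2n−1−r, r)·(x + 2w·i)^{n−r−1}·(−w·i)^r, where C(·,·) denotes the binomial coefficient. -/
/-- Odd-index sums. -/
noncomputable def cA (a b : ℂ) (n : ℕ) : ℂ :=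
  ∑ r ∈ Finset.range n, (Nat.choose (2 * n - 1 - r) r : ℂ) * a ^ (n - r - 1) * b ^ r

/-- Even-index sums. -/
noncomputable def cB (a b : ℂ) (n : ℕ) : ℂ :=
  ∑ r ∈ Finset.range (n + 1), (Nat.choose (2 * n - r) r : ℂ) * a ^ (n - r) * b ^ r

theorem cA_succ (a b : ℂ) (n : ℕ) : cA a b (n + 1) = cB a b n + b * cA a b n := by
  unfold cA cB
  rw [Finset.sum_range_succ', Finset.sum_range_succ' _ n, Finset.mul_sum, add_right_comm,
    ← Finset.sum_add_distrib]
  congr 1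
  · apply Finset.sum_congr rfl
    intro r hr
    have hr := Finset.mem_range.mp hr
    have h1 : 2 * (n + 1) - 1 - (r + 1) = (2 * n - 1 - r) + 1 := by omega
    have h2 : 2 * n - (r + 1) = 2 * n - 1 - r := by omega
    have h3 : n + 1 - (r + 1) - 1 = n - r - 1 := by omega
    have h4 : n - (r + 1) = n - r - 1 := by omega
    rw [h1, h2, h3, h4, Nat.choose_succ_succ]
    push_cast
    ring
  · simp

theorem cB_succ (a b : ℂ) (n : ℕ) :
    cB a b (n + 1) = a * cA a b (n + 1) + b * cB a b n := by
  have hA : a * cA a b (n + 1) = ∑ r ∈ Finset.range (n + 2),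
      (Nat.choose (2 * n + 1 - r) r : ℂ) * a ^ (n + 1 - r) * b ^ r := by
    rw [Finset.sum_range_succ, Nat.choose_eq_zero_of_lt (by omega : 2 * n + 1 - (n + 1) < n + 1)]
    unfold cA
    rw [Finset.mul_sum]
    simp only [Nat.cast_zero, zero_mul, add_zero]
    apply Finset.sum_congr rfl
    intro r hr
    have hr := Finset.mem_range.mp hr
    have h1 : 2 * (n + 1) - 1 - r = 2 * n + 1 - r := by omega
    have h2 : n + 1 - r = (n + 1 - r - 1) + 1 := by omega
    rw [h1, h2, pow_succ, Nat.add_sub_cancel]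
    ring
  rw [hA]
  unfold cB
  rw [Finset.sum_range_succ', Finset.sum_range_succ' _ (n + 1), Finset.mul_sum, add_right_comm,
    ← Finset.sum_add_distrib]
  congr 1
  · apply Finset.sum_congr rfl
    intro r hr
    have hr := Finset.mem_range.mp hr
    have h1 : 2 * (n + 1) - (r + 1) = (2 * n - r) + 1 := by omega
    have h2 : 2 * n + 1 - (r + 1) = 2 * n - r := by omega
    have h3 : n + 1 - (r + 1) = n - r := by omega
    rw [h1, h2, h3, Nat.choose_succ_succ]
    push_cast
    ring

theorem bF_eq_cA (a b : ℂ) (n : ℕ) :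
    bF (a + 2 * b) (-b ^ 2) n = cA a b n ∧
      bF (a + 2 * b) (-b ^ 2) (n + 1) = cA a b (n + 1) := by
  induction n with
  | zero => simp [bF, cA]
  | succ n ih =>
    refine ⟨ih.2, ?_⟩
    rw [bF, ih.1, ih.2, cA_succ a b (n + 1), cB_succ]
    have h := cA_succ a b n
    linear_combination b * h

/-- Complex representation: if `w² = y` then for every `n ≥ 1`,
`F n (x, y) = ∑_{r=0}^{n−1} C(2n−1−r, r) (x + 2wi)^(n−r−1) (−wi)^r`. -/
theorem complex_representation (x y w : ℂ) (hw : w ^ 2 = y) :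
    ∀ n : ℕ, 1 ≤ n →
      bF x y n =
        ∑ r ∈ Finset.range n,
          (Nat.choose (2 * n - 1 - r) r : ℂ) *
            (x + 2 * w * Complex.I) ^ (n - r - 1) * (-(w * Complex.I)) ^ r := by
  intro n _
  have h := (bF_eq_cA (x + 2 * w * Complex.I) (-(w * Complex.I)) n).1
  have hx : x + 2 * w * Complex.I + 2 * (-(w * Complex.I)) = x := by ring
  have hy : -(-(w * Complex.I)) ^ 2 = y := by
    rw [neg_sq, mul_pow, Complex.I_sq, hw]
    ring
  rw [hx, hy] at h
  exact h
end

section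
/- Let R be a commutative ring and x, y ∈ R. Then for all n ≥ 0 and m ≥ 1: if m is odd, L_n^m = ∑_{k=0}^{⌊m/2⌋} C(m, k)·(−y)^{k·n}·L_{n·(m−2k)}, and if m is even, L_n^m = ∑_{k=0}^{m/2 − 1} C(m, k)·(−y)^{k·n}·L_{n·(m−2k)} + C(m, m/2)·(−y)^{m·n/2}, where C(·,·) denotes the binomial coefficient. -/
/-- Bivariate Lucas polynomials: `L 0 = 2`, `L 1 = x`, `L (n+2) = x*L (n+1) + y*L n`. -/
def bL {R : Type*} [CommRing R] (x y : R) : ℕ → R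
  | 0 => 2
  | 1 => x
  | n + 2 => x * bL x y (n + 1) + y * bL x y n

theorem bL_aux {R S : Type*} [CommRing R] [CommRing S] (f : R →+* S) (x y : R) (a b : S)
    (h1 : a + b = f x) (h2 : a * b = -f y) (n : ℕ) :
    f (bL x y n) = a ^ n + b ^ n := by
  have hy : f y = -(a * b) := by rw [h2, neg_neg]
  induction n using Nat.twoStepInduction with
  | zero => simp only [bL, map_ofNat, pow_zero]; norm_num
  | one => simp only [bL, pow_one, h1]
  | more n ih1 ih2 =>
    simp only [bL, map_add, map_mul, ih1, ih2, ← h1, hy]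
    ring

theorem pair_aux {S : Type*} [CommRing S] (u v : S) (m k : ℕ) (hk : 2 * k ≤ m) :
    u ^ k * v ^ (m - k) * (Nat.choose m k : S) +
      u ^ (m - k) * v ^ (m - (m - k)) * (Nat.choose m (m - k) : S) =
    (Nat.choose m k : S) * (u * v) ^ k * (u ^ (m - 2 * k) + v ^ (m - 2 * k)) := by
  obtain ⟨d, rfl⟩ := Nat.exists_eq_add_of_le hk
  rw [Nat.choose_symm (by omega : k ≤ 2 * k + d),
    show 2 * k + d - k = k + d by omega, show 2 * k + d - (k + d) = k by omega,
    show 2 * k + d - 2 * k = d by omega]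
  ring

theorem odd_aux {S : Type*} [CommRing S] (u v : S) (j : ℕ) :
    (u + v) ^ (2 * j + 1) = ∑ k ∈ Finset.range (j + 1), (Nat.choose (2 * j + 1) k : S) *
      (u * v) ^ k * (u ^ (2 * j + 1 - 2 * k) + v ^ (2 * j + 1 - 2 * k)) := by
  rw [add_pow, show 2 * j + 1 + 1 = (j + 1) + (j + 1) by ring, Finset.sum_range_add,
    ← Finset.sum_range_reflect (fun k => u ^ (j + 1 + k) * _ * _), ← Finset.sum_add_distrib]
  refine Finset.sum_congr rfl fun k hk => ?_
  have hk' := Finset.mem_range.1 hk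
  rw [← pair_aux u v _ k (by omega), show j + 1 + (j + 1 - 1 - k) = 2 * j + 1 - k by omega]

theorem even_aux {S : Type*} [CommRing S] (u v : S) (j : ℕ) :
    (u + v) ^ (2 * j) = ∑ k ∈ Finset.range j, (Nat.choose (2 * j) k : S) *
      (u * v) ^ k * (u ^ (2 * j - 2 * k) + v ^ (2 * j - 2 * k)) +
      (Nat.choose (2 * j) j : S) * (u * v) ^ j := by
  rw [add_pow, show 2 * j + 1 = (j + 1) + j by ring, Finset.sum_range_add,
    Finset.sum_range_succ, add_right_comm,
    ← Finset.sum_range_reflect (fun k => u ^ (j + 1 + k) * _ * _), ← Finset.sum_add_distrib]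
  congr 1
  · refine Finset.sum_congr rfl fun k hk => ?_
    have hk' := Finset.mem_range.1 hk
    rw [← pair_aux u v _ k (by omega), show j + 1 + (j - 1 - k) = 2 * j - k by omega]
  · rw [show 2 * j - j = j by omega, mul_pow]; ring

/-- Powers of Lucas polynomials: for `n ≥ 0` and `m ≥ 1`, if `m` is odd then
`L n ^ m = ∑_{k=0}^{⌊m/2⌋} C(m, k) (−y)^(kn) L (n(m−2k))`, and if `m` is even then
`L n ^ m = ∑_{k=0}^{m/2−1} C(m, k) (−y)^(kn) L (n(m−2k)) + C(m, m/2) (−y)^(mn/2)`. -/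
theorem lucas_powers {R : Type*} [CommRing R] (x y : R) :
    ∀ n m : ℕ, 1 ≤ m →
      (Odd m →
        bL x y n ^ m =
          ∑ k ∈ Finset.range (m / 2 + 1),
            (Nat.choose m k : R) * (-y) ^ (k * n) * bL x y (n * (m - 2 * k))) ∧
      (Even m →
        bL x y n ^ m =
          (∑ k ∈ Finset.range (m / 2),
            (Nat.choose m k : R) * (-y) ^ (k * n) * bL x y (n * (m - 2 * k))) +
          (Nat.choose m (m / 2) : R) * (-y) ^ (m * n / 2)) := by
  intro n m _
  let f : R →+* QuadraticAlgebra R y x := algebraMap R (QuadraticAlgebra R y x)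
  have hf : Function.Injective f := by
    intro r s h
    have := congrArg QuadraticAlgebra.re h
    simpa [f] using this
  let a : QuadraticAlgebra R y x := ⟨0, 1⟩
  let b : QuadraticAlgebra R y x := ⟨x, -1⟩
  have h1 : a + b = f x := by
    ext <;> simp [a, b, f]
  have h2 : a * b = -f y := by
    ext <;> simp [a, b, f]
  have hL := bL_aux f x y a b h1 h2
  have h3 : ∀ k, (a ^ n * b ^ n) ^ k = (-f y) ^ (k * n) := by
    intro k
    rw [← mul_pow, h2, ← pow_mul, mul_comm n k]
  constructor
  · rintro ⟨j, rfl⟩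
    apply hf
    rw [show (2 * j + 1) / 2 = j by omega]
    simp only [map_pow, map_sum, map_mul, map_neg, map_natCast, hL]
    rw [odd_aux]
    simp only [h3, ← pow_mul]
  · rintro ⟨j, rfl⟩
    apply hf
    rw [← two_mul, show 2 * j / 2 = j by omega,
      show 2 * j * n / 2 = j * n by rw [mul_assoc]; omega]
    simp only [map_pow, map_add, map_sum, map_mul, map_neg, map_natCast, hL]
    rw [even_aux]
    simp only [h3, ← pow_mul]
end

section
/- Let R be a commutative ring and x, y ∈ R. Then for every n ≥ 0, ∑_{k=0}^{n} C(n, k)·x^k·y^{n−k}·F_k = F_{2n} and ∑_{k=0}^{n} C(n, k)·x^k·y^{n−k}·L_k = L_{2n}, where C(·,·) denotes the binomial coefficient. -/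
theorem doubling_aux {R : Type*} [CommRing R] (x y : R) (G : ℕ → R)
    (hG : ∀ n, G (n + 2) = x * G (n + 1) + y * G n) (n : ℕ) : ∀ m : ℕ,
    ∑ ij ∈ Finset.HasAntidiagonal.antidiagonal n,
      (Nat.choose n ij.1 : R) * (x ^ ij.1 * y ^ ij.2 * G (m + ij.1)) = G (m + 2 * n) := by
  induction n with
  | zero => intro m; simp
  | succ n ih =>
    intro m
    rw [Finset.sum_antidiagonal_choose_succ_mul (fun i j => x ^ i * y ^ j * G (m + i)) n]
    have e : m + 2 * (n + 1) = (m + 2 * n) + 2 := by ring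
    have e1 : m + 2 * n + 1 = m + 1 + 2 * n := by ring
    rw [e, hG, e1, ← ih m, ← ih (m + 1), Finset.mul_sum, Finset.mul_sum, add_comm]
    congr 1
    · refine Finset.sum_congr rfl fun ij hij => ?_
      have h : n.choose ij.2 = n.choose ij.1 :=
        (Nat.choose_symm_of_eq_add (Finset.HasAntidiagonal.mem_antidiagonal.mp hij).symm).symm
      have e2 : m + (ij.1 + 1) = m + 1 + ij.1 := by ring
      simp only [h, e2]
      ring
    · refine Finset.sum_congr rfl fun ij _ => ?_
      ring

theorem doubling_aux_range {R : Type*} [CommRing R] (x y : R) (G : ℕ → R)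
    (hG : ∀ n, G (n + 2) = x * G (n + 1) + y * G n) (n : ℕ) :
    ∑ k ∈ Finset.range (n + 1),
      (Nat.choose n k : R) * x ^ k * y ^ (n - k) * G k = G (2 * n) := by
  have h := doubling_aux x y G hG n 0
  rw [Finset.Nat.sum_antidiagonal_eq_sum_range_succ_mk] at h
  simpa [mul_assoc] using h

/-- Binomial doubling sums: `∑_{k=0}^{n} C(n, k) xᵏ y^(n−k) F k = F (2n)` and
`∑_{k=0}^{n} C(n, k) xᵏ y^(n−k) L k = L (2n)`. -/
theorem binomial_doubling {R : Type*} [CommRing R] (x y : R) :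
    ∀ n : ℕ,
      (∑ k ∈ Finset.range (n + 1),
        (Nat.choose n k : R) * x ^ k * y ^ (n - k) * bF x y k = bF x y (2 * n)) ∧
      (∑ k ∈ Finset.range (n + 1),
        (Nat.choose n k : R) * x ^ k * y ^ (n - k) * bL x y k = bL x y (2 * n)) := by
  intro n
  exact ⟨doubling_aux_range x y (bF x y) (fun n => by rw [bF]) n,
    doubling_aux_range x y (bL x y) (fun n => by rw [bL]) n⟩
end

section
/- Let R be a commutative ring and x, y ∈ R. Then for every n ≥ 0, L_{n+2}² + y·L_{n+1}² = L_{2n+4} + y·L_{2n+2}. -/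
/-- Doubling formulas. -/
theorem bL_double {R : Type*} [CommRing R] (x y : R) (n : ℕ) :
    bL x y n ^ 2 = bL x y (2 * n) + 2 * (-y) ^ n ∧
    bL x y (n + 1) * bL x y n = bL x y (2 * n + 1) + x * (-y) ^ n ∧
    bL x y (n + 1) ^ 2 = bL x y (2 * n + 2) + 2 * (-y) ^ (n + 1) := by
  have hrec : ∀ k, bL x y (k + 2) = x * bL x y (k + 1) + y * bL x y k := by
    intro k; rw [bL]
  induction n with
  | zero =>
    simp only [bL, Nat.mul_zero, Nat.zero_add]
    refine ⟨by ring, by ring, by ring⟩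
  | succ n ih =>
    obtain ⟨h1, h2, h3⟩ := ih
    have e1 : 2 * (n + 1) = 2 * n + 2 := by ring
    have r0 := hrec n
    have r1 := hrec (2 * n)
    have r2 := hrec (2 * n + 1)
    have r3 := hrec (2 * n + 2)
    rw [e1]
    refine ⟨h3, ?_, ?_⟩
    · rw [show n + 1 + 1 = n + 2 from rfl, r0]
      simp only [Nat.add_assoc, Nat.reduceAdd] at *
      rw [r2]
      linear_combination x * h3 + y * h2
    · rw [show n + 1 + 1 = n + 2 from rfl, r0]
      simp only [Nat.add_assoc, Nat.reduceAdd] at *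
      rw [r3, r2]
      linear_combination x ^ 2 * h3 + 2 * x * y * h2 + y ^ 2 * h1 - y * r1

/-- For every `n ≥ 0`, `L (n+2) ^ 2 + y L (n+1) ^ 2 = L (2n+4) + y L (2n+2)`. -/
theorem lucas_sq_identity {R : Type*} [CommRing R] (x y : R) :
    ∀ n : ℕ,
      bL x y (n + 2) ^ 2 + y * bL x y (n + 1) ^ 2 =
        bL x y (2 * n + 4) + y * bL x y (2 * n + 2) := by
  intro n
  have h1 := (bL_double x y (n + 1)).1
  have h2 := (bL_double x y (n + 1)).2.2
  rw [show 2 * (n + 1) = 2 * n + 2 by ring] at h1 h2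
  simp only [Nat.add_assoc, Nat.reduceAdd] at h1 h2
  linear_combination h2 + y * h1
end

section
/- Let R be a commutative ring and x, y ∈ R. Then for every n ≥ 0, L_n·L_{n+4} − L_{n+1}·L_{n+3} = (−1)ⁿ·(x⁴·yⁿ + 5·x²·y^{n+1} + 4·y^{n+2}). -/
/-- For every `n ≥ 0`,
`L n L (n+4) − L (n+1) L (n+3) = (−1)ⁿ (x⁴ yⁿ + 5 x² y^(n+1) + 4 y^(n+2))`. -/
theorem lucas_catalan {R : Type*} [CommRing R] (x y : R) :
    ∀ n : ℕ,
      bL x y n * bL x y (n + 4) - bL x y (n + 1) * bL x y (n + 3) =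
        (-1) ^ n * (x ^ 4 * y ^ n + 5 * x ^ 2 * y ^ (n + 1) + 4 * y ^ (n + 2)) := by
  intro n
  induction n with
  | zero => simp only [bL]; ring
  | succ k ih =>
    simp only [bL] at ih ⊢
    linear_combination (-y) * ih
end
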